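/- For every function f holomorphic on 𝔻: (i) the function 𝒟(f)(z) = ∏_{j=1}^{n−1} (f(z) − f(φ_j(z))) is well defined and holomorphic on all of 𝔻; (ii) the quotient Γ(f)(z) = 𝒟(f)(z)/𝒟(z), where 𝒟(z) = ∏_{j=1}^{n−1} (z − φ_j(z)), which a priori is meromorphic with possible singularities at the points where B′ vanishes, has only removable singularities and hence extends to a holomorphic function on 𝔻; (iii) if f is bounded on 𝔻 then Γ(f) is bounded on 𝔻. -/

import Mathlib

/-!
Since `f z - f w = (z - w) * dslope f z w`, the quotient `Γ(f)(z)` is the product of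
`dslope f z (φ_j(z))` over `1 ≤ j < n`. Write `B = P / Q`. The points `φ_1(z), …, φ_{n-1}(z)` are
the roots of `(P - B(z) Q) / (X - z)`, whose coefficients are holomorphic in `z` and whose degree
does not depend on `z`, because the leading coefficient of `P - B(z) Q` is
`(-1)^n (1 - B(z) ∏ conj(a_j)) ≠ 0`.

For polynomials `p_z` of constant degree with holomorphic coefficients, the product of `F(z, w)`
over the roots `w` of `p_z` is holomorphic in `z`: `F(z, ·)` may be replaced by its Hermite
interpolant at the roots of `p_z`, whose coefficients are Cauchy integrals depending
holomorphically on `z`, and then the product is a resultant divided by a power of the leading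
coefficient. The Cauchy integrals see `F(z, ·)` only on a circle around the roots and around `z`,
hence only off the diagonal, where `dslope` is a quotient.

For the bound, `𝒟` equals `B' Q` up to the leading coefficient, and on the unit circle
`z B'(z) / B(z) = ∑ (1 - |a_j|²) / |a_j - z|²` is positive. Hence `|𝒟|` is bounded below near the
circle, where `|Γ(f)| = |𝒟(f)| / |𝒟|`, and away from the circle `Γ(f)` is bounded by compactness.
-/

open Complex Polynomial MeasureTheory Metric Set Filter Topology
open scoped Classical

noncomputable section

/-- The open unit disk in `ℂ`. -/
def uDisk : Set ℂ := Metric.ball 0 1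

/-- The closed unit disk in `ℂ`. -/
def cDisk : Set ℂ := Metric.closedBall 0 1

/-- The finite Blaschke product with zero set `a 0, …, a (n-1)`:
`B(z) = ∏_j (a_j - z)/(1 - conj(a_j)·z)`. -/
def blaschke {n : ℕ} (a : Fin n → ℂ) (z : ℂ) : ℂ :=
  ∏ j, (a j - z) / (1 - (starRingEnd ℂ) (a j) * z)

/-- The multiset of the `n` solutions (with multiplicity) `φ_0(z) = z, φ_1(z), …, φ_{n-1}(z)`
of `B(w) = B(z)`, realized as the roots of the polynomial equation
`∏_j (a_j - w) = B(z) · ∏_j (1 - conj(a_j)·w)`. -/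
def fiberMS {n : ℕ} (a : Fin n → ℂ) (z : ℂ) : Multiset ℂ :=
  ((∏ j, (Polynomial.C (a j) - Polynomial.X)) -
    Polynomial.C (blaschke a z) *
      ∏ j, (1 - Polynomial.C ((starRingEnd ℂ) (a j)) * Polynomial.X)).roots

/-- `𝒟(f)(z) = ∏_{j=1}^{n-1} (f(z) - f(φ_j(z)))`, where `φ_1(z), …, φ_{n-1}(z)` is the
fiber of `B` over `B(z)` with one copy of `z` removed.  In particular
`calD a id z = ∏_{j=1}^{n-1} (z - φ_j(z))`. -/
def calD {n : ℕ} (a : Fin n → ℂ) (f : ℂ → ℂ) (z : ℂ) : ℂ :=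
  (((fiberMS a z).erase z).map (fun w => f z - f w)).prod

/-- `G` is (the holomorphic extension after removing singularities of) `Γ(f) = 𝒟(f)/𝒟`. -/
def IsGamma {n : ℕ} (a : Fin n → ℂ) (f G : ℂ → ℂ) : Prop :=
  DifferentiableOn ℂ G uDisk ∧ ∀ z ∈ uDisk, G z * calD a id z = calD a f z

/-- `p`-th power integral mean of `f` on the circle of radius `r`. -/
def circMean (p : ℝ) (f : ℂ → ℂ) (r : ℝ) : ℝ :=
  ∫ θ in (0:ℝ)..(2 * Real.pi), ‖f ((r : ℂ) * Complex.exp ((θ : ℂ) * Complex.I))‖ ^ p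

/-- The `H^p` norm of `f` (for `0 < p < ∞`). -/
def hpNorm (p : ℝ) (f : ℂ → ℂ) : ℝ :=
  (sSup {m : ℝ | ∃ r ∈ Set.Ico (0:ℝ) 1, m = circMean p f r}) ^ (1 / p)

/-- Membership in the Hardy space `H^p`, `0 < p < ∞`: holomorphic on the disk with
uniformly bounded integral means. -/
def MemHp (p : ℝ) (f : ℂ → ℂ) : Prop :=
  DifferentiableOn ℂ f uDisk ∧ ∃ C : ℝ, ∀ r ∈ Set.Ico (0:ℝ) 1, circMean p f r ≤ C

/-- Membership in `H^∞`: bounded holomorphic functions on the disk. -/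
def MemHinf (f : ℂ → ℂ) : Prop :=
  DifferentiableOn ℂ f uDisk ∧ ∃ C : ℝ, ∀ z ∈ uDisk, ‖f z‖ ≤ C

/-- The `H^∞` (sup) norm. -/
def hinfNorm (f : ℂ → ℂ) : ℝ := sSup {m : ℝ | ∃ z ∈ uDisk, m = ‖f z‖}

/-- The algebra of all polynomials in the functions `F 0, …, F (m-1)`. -/
def algGen (m : ℕ) (F : Fin m → (ℂ → ℂ)) : Set (ℂ → ℂ) :=
  {h | ∃ P : MvPolynomial (Fin m) ℂ, ∀ z : ℂ, h z = MvPolynomial.eval (fun i => F i z) P}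

/-- The algebra `ℂ[F,G]` of all polynomials in the two functions `F` and `G`. -/
def algGen2 (F G : ℂ → ℂ) : Set (ℂ → ℂ) := algGen 2 ![F, G]

/-- The (sequential) closure of `S` in `H^p`. -/
def hpClosure (p : ℝ) (S : Set (ℂ → ℂ)) : Set (ℂ → ℂ) :=
  {f | MemHp p f ∧ ∃ u : ℕ → (ℂ → ℂ), (∀ k, u k ∈ S) ∧
    Filter.Tendsto (fun k => hpNorm p (fun z => f z - u k z)) Filter.atTop (nhds 0)}

/-- `S` has finite codimension in `H^p`: finitely many functions in `H^p` together with `S`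
span all of `H^p`. -/
def FiniteCodimHp (p : ℝ) (S : Set (ℂ → ℂ)) : Prop :=
  ∃ (k : ℕ) (e : Fin k → (ℂ → ℂ)), (∀ i, MemHp p (e i)) ∧
    ∀ f, MemHp p f → ∃ (c : Fin k → ℂ) (s : ℂ → ℂ), s ∈ S ∧
      ∀ z ∈ uDisk, f z = s z + ∑ i, c i * e i z

/-- Inner function: bounded by 1, holomorphic, radial limits of modulus 1 a.e. -/
def IsInner (f : ℂ → ℂ) : Prop :=
  DifferentiableOn ℂ f uDisk ∧ (∀ z ∈ uDisk, ‖f z‖ ≤ 1) ∧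
  ∀ᵐ θ : ℝ ∂volume, ∃ l : ℂ, ‖l‖ = 1 ∧
    Filter.Tendsto (fun r : ℝ => f ((r : ℂ) * Complex.exp ((θ : ℂ) * Complex.I)))
      (nhdsWithin 1 (Set.Iio 1)) (nhds l)

/-- `J` divides `h`, with a quotient holomorphic on the disk. -/
def InnerDivides (J h : ℂ → ℂ) : Prop :=
  ∃ k : ℂ → ℂ, DifferentiableOn ℂ k uDisk ∧ ∀ z ∈ uDisk, h z = J z * k z

/-- Outer function: a holomorphic function on the disk whose only inner divisors are
unimodular constants (i.e. whose inner part is a unimodular constant). -/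
def IsOuter (h : ℂ → ℂ) : Prop :=
  DifferentiableOn ℂ h uDisk ∧
  ∀ J : ℂ → ℂ, IsInner J → InnerDivides J h →
    ∃ c : ℂ, ‖c‖ = 1 ∧ ∀ z ∈ uDisk, J z = c

/-- `I` is the inner part of `h`: `I` is inner and `h = I·F` with `F` outer. -/
def IsInnerPartOf (I h : ℂ → ℂ) : Prop :=
  IsInner I ∧ ∃ F : ℂ → ℂ, IsOuter F ∧ ∀ z ∈ uDisk, h z = I z * F z

/-- Finite Blaschke product (up to a unimodular constant factor). -/
def IsFiniteBlaschke (f : ℂ → ℂ) : Prop :=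
  ∃ (m : ℕ) (c : ℂ) (b : Fin m → ℂ), ‖c‖ = 1 ∧ (∀ i, b i ∈ uDisk) ∧
    ∀ z ∈ uDisk, f z = c * ∏ i, (b i - z) / (1 - (starRingEnd ℂ) (b i) * z)

/-- `h` has no singular inner factor: every zero-free inner divisor of `h` is a
unimodular constant. -/
def NoSingularInnerFactor (h : ℂ → ℂ) : Prop :=
  ∀ J : ℂ → ℂ, IsInner J → (∀ z ∈ uDisk, J z ≠ 0) → InnerDivides J h →
    ∃ c : ℂ, ‖c‖ = 1 ∧ ∀ z ∈ uDisk, J z = c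

section PolynomialFamily

variable {𝕜 E : Type*} [NontriviallyNormedField 𝕜] [NormedAddCommGroup E] [NormedSpace 𝕜 E]
  {s : Set E} {p q : E → 𝕜[X]} {m n : ℕ}

lemma differentiableOn_resultant (hp : ∀ i, DifferentiableOn 𝕜 (fun x => (p x).coeff i) s)
    (hq : ∀ i, DifferentiableOn 𝕜 (fun x => (q x).coeff i) s) :
    DifferentiableOn 𝕜 (fun x => resultant (p x) (q x) m n) s := by
  have hentry : ∀ i j, DifferentiableOn 𝕜 (fun x => sylvester (p x) (q x) m n i j) s := by
    intro i j
    induction j using Fin.addCases with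
    | left j =>
      simp only [sylvester, Matrix.of_apply, Fin.addCases_left]
      split_ifs
      exacts [hq _, differentiableOn_const 0]
    | right j =>
      simp only [sylvester, Matrix.of_apply, Fin.addCases_right]
      split_ifs
      exacts [hp _, differentiableOn_const 0]
  simp only [resultant, Matrix.det_apply']
  exact DifferentiableOn.fun_sum fun σ _ => DifferentiableOn.const_mul (fun x hx =>
    (HasFDerivWithinAt.finsetProd fun j _ =>
      (hentry (σ j) j x hx).hasFDerivWithinAt).differentiableWithinAt) _

lemma differentiableOn_prod_eval_roots [IsAlgClosed 𝕜]
    (hp : ∀ i, DifferentiableOn 𝕜 (fun x => (p x).coeff i) s)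
    (hpdeg : ∀ x ∈ s, (p x).degree = m)
    (hq : ∀ i, DifferentiableOn 𝕜 (fun x => (q x).coeff i) s)
    (hqdeg : ∀ x ∈ s, (q x).natDegree ≤ n) :
    DifferentiableOn 𝕜 (fun x => ((p x).roots.map (q x).eval).prod) s := by
  have hcoeff : ∀ x ∈ s, (p x).coeff m ≠ 0 := fun x hx => coeff_ne_zero_of_eq_degree (hpdeg x hx)
  refine ((differentiableOn_resultant (m := m) (n := n) hp hq).mul
    (((hp m).pow n).inv fun x hx => pow_ne_zero n (hcoeff x hx))).congr fun x hx => ?_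
  have hres := resultant_eq_prod_eval (p x) (q x) n (hqdeg x hx) (IsAlgClosed.splits _)
  rw [leadingCoeff, natDegree_eq_of_degree_eq_some (hpdeg x hx)] at hres
  exact (eq_mul_inv_iff_mul_eq₀ (pow_ne_zero n (hcoeff x hx))).mpr ((mul_comm _ _).trans hres.symm)

lemma differentiableOn_eval (hp : ∀ i, DifferentiableOn 𝕜 (fun x => (p x).coeff i) s)
    (hdeg : ∀ x ∈ s, (p x).natDegree ≤ m) {c : E → 𝕜} (hc : DifferentiableOn 𝕜 c s) :
    DifferentiableOn 𝕜 (fun x => (p x).eval (c x)) s :=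
  (DifferentiableOn.fun_sum fun i _ => (hp i).mul (hc.pow i)).congr fun x hx =>
    eval_eq_sum_range' (Nat.lt_succ_of_le (hdeg x hx)) (c x)

lemma differentiableOn_coeff_divByMonic_X_sub_C
    (hp : ∀ i, DifferentiableOn 𝕜 (fun x => (p x).coeff i) s)
    (hdeg : ∀ x ∈ s, (p x).natDegree = m) {c : E → 𝕜} (hc : DifferentiableOn 𝕜 c s) (i : ℕ) :
    DifferentiableOn 𝕜 (fun x => (p x /ₘ (X - C (c x))).coeff i) s :=
  (DifferentiableOn.fun_sum fun k _ => (hc.pow (k - (i + 1))).mul (hp k)).congr fun x hx => by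
    rw [coeff_divByMonic_X_sub_C, hdeg x hx]; rfl

end PolynomialFamily

section ParametricIntegral

lemma aestronglyMeasurable_deriv_of_eventually {𝕜 E α : Type*} [NontriviallyNormedField 𝕜]
    [NormedAddCommGroup E] [NormedSpace 𝕜 E] [MeasurableSpace α] {μ : Measure α}
    {F : 𝕜 → α → E} {z₀ : 𝕜} (hmeas : ∀ᶠ z in 𝓝 z₀, AEStronglyMeasurable (F z) μ)
    (hdiff : ∀ x, DifferentiableAt 𝕜 (fun z => F z x) z₀) :
    AEStronglyMeasurable (fun x => deriv (fun z => F z x) z₀) μ := by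
  obtain ⟨u, hu, humeas⟩ := exists_seq_forall_of_frequently
    (hmeas.filter_mono (nhdsWithin_le_nhds (s := {z₀}ᶜ))).frequently
  refine aestronglyMeasurable_of_tendsto_ae atTop
    (fun k => ((humeas k).sub hmeas.self_of_nhds).const_smul (u k - z₀)⁻¹) (.of_forall fun x => ?_)
  exact (hasDerivAt_iff_tendsto_slope.mp (hdiff x).hasDerivAt).comp hu

lemma differentiableOn_intervalIntegral {E : Type*} [NormedAddCommGroup E] [NormedSpace ℂ E]
    {U : Set ℂ} (hU : IsOpen U) {G : ℂ → ℝ → E} {a b : ℝ}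
    (hcont : ContinuousOn (Function.uncurry G) (U ×ˢ univ))
    (hdiff : ∀ t, DifferentiableOn ℂ (fun z => G z t) U) :
    DifferentiableOn ℂ (fun z => ∫ t in a..b, G z t) U := by
  intro z₀ hz₀
  obtain ⟨δ, hδ, hball⟩ := nhds_basis_closedBall.mem_iff.mp (hU.mem_nhds hz₀)
  obtain ⟨M, hM⟩ := ((isCompact_closedBall z₀ δ).prod (isCompact_uIcc (a := a) (b := b)))
    |>.exists_bound_of_continuousOn (hcont.mono (prod_mono hball (subset_univ _)))
  have hdiffAt : ∀ t, ∀ z ∈ U, DifferentiableAt ℂ (fun z => G z t) z :=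
    fun t z hz => (hdiff t).differentiableAt (hU.mem_nhds hz)
  have hslice : ∀ z ∈ U, Continuous (G z) := fun z hz =>
    hcont.comp_continuous (f := fun t => (z, t)) (by fun_prop) fun t => ⟨hz, trivial⟩
  have hmeas : ∀ᶠ z in 𝓝 z₀, AEStronglyMeasurable (G z) (volume.restrict (uIoc a b)) :=
    eventually_of_mem (hU.mem_nhds hz₀) fun z hz => (hslice z hz).aestronglyMeasurable
  have hcauchy : ∀ t ∈ uIoc a b, ∀ z ∈ ball z₀ (δ / 2),
      ‖deriv (fun z => G z t) z‖ ≤ M / (δ / 2) := fun t ht z hz => by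
    have hsub : closedBall z (δ / 2) ⊆ closedBall z₀ δ :=
      closedBall_subset_closedBall' (by linarith [mem_ball.mp hz])
    have hclosure : closure (ball z (δ / 2)) ⊆ U :=
      closure_ball_subset_closedBall.trans (hsub.trans hball)
    exact norm_deriv_le_of_forall_mem_sphere_norm_le (half_pos hδ)
      ((hdiff t).mono hclosure).diffContOnCl fun u hu =>
        hM (u, t) ⟨hsub (sphere_subset_closedBall hu), uIoc_subset_uIcc ht⟩
  have hhalf : ball z₀ (δ / 2) ⊆ U :=
    ((ball_subset_ball (half_le_self hδ.le)).trans ball_subset_closedBall).trans hball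
  exact (intervalIntegral.hasDerivAt_integral_of_dominated_loc_of_deriv_le
    (F' := fun z t => deriv (fun z => G z t) z) (bound := fun _ => M / (δ / 2))
    (ball_mem_nhds z₀ (half_pos hδ)) hmeas ((hslice z₀ hz₀).intervalIntegrable _ _)
    (aestronglyMeasurable_deriv_of_eventually hmeas fun t => hdiffAt t z₀ hz₀)
    (.of_forall hcauchy) intervalIntegrable_const
    (.of_forall fun t _ z hz => (hdiffAt t z (hhalf hz)).hasDerivAt)
    ).2.differentiableAt.differentiableWithinAt

lemma differentiableOn_circleIntegral {E : Type*} [NormedAddCommGroup E] [NormedSpace ℂ E]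
    {U : Set ℂ} (hU : IsOpen U) {c : ℂ} {R : ℝ} (hR : 0 ≤ R) {G : ℂ → ℂ → E}
    (hcont : ContinuousOn (Function.uncurry G) (U ×ˢ sphere c R))
    (hdiff : ∀ ζ ∈ sphere c R, DifferentiableOn ℂ (fun z => G z ζ) U) :
    DifferentiableOn ℂ (fun z => ∮ ζ in C(c, R), G z ζ) U := by
  have hsphere : ∀ θ, circleMap c R θ ∈ sphere c R := circleMap_mem_sphere c hR
  refine differentiableOn_intervalIntegral hU ?_ fun θ => (hdiff _ (hsphere θ)).const_smul _
  refine ContinuousOn.smul (f := fun x : ℂ × ℝ => deriv (circleMap c R) x.2) ?_ ?_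
  · simp only [deriv_circleMap]
    fun_prop
  · exact hcont.comp (f := fun x : ℂ × ℝ => (x.1, circleMap c R x.2)) (by fun_prop)
      fun x hx => ⟨hx.1, hsphere x.2⟩

end ParametricIntegral

section Topology

variable {α : Type*} [PseudoMetricSpace α] [ProperSpace α] {x : α} {r : ℝ} {g : α → ℝ}

lemma exists_lt_forall_mem_ball_of_le {c : ℝ} (hg : ContinuousOn g (closedBall x r))
    (hc : ∀ y ∈ sphere x r, c < g y) :
    ∃ r' < r, ∀ y ∈ closedBall x r, g y ≤ c → y ∈ ball x r' := by
  have hclosed : IsClosed (closedBall x r ∩ g ⁻¹' Iic c) :=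
    hg.preimage_isClosed_of_isClosed isClosed_closedBall isClosed_Iic
  have hsub : closedBall x r ∩ g ⁻¹' Iic c ⊆ ball x r := fun y hy =>
    mem_ball.mpr <| (mem_closedBall.mp hy.1).lt_of_ne fun h => (hc y h).not_ge hy.2
  obtain ⟨r', hr', hball⟩ := exists_lt_subset_ball hclosed hsub
  exact ⟨r', hr', fun y hy hle => hball ⟨hy, hle⟩⟩

lemma exists_pos_forall_notMem_ball_lt (hg : ContinuousOn g (closedBall x r))
    (hpos : ∀ y ∈ sphere x r, 0 < g y) :
    ∃ c > 0, ∃ r' < r, ∀ y ∈ closedBall x r, y ∉ ball x r' → c < g y := by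
  obtain ⟨c, hc, hle⟩ := (isCompact_sphere x r).exists_forall_le'
    (hg.mono sphere_subset_closedBall) hpos
  obtain ⟨r', hr', hball⟩ := exists_lt_forall_mem_ball_of_le (c := c / 2) hg
    fun y hy => (half_lt_self hc).trans_le (hle y hy)
  exact ⟨c / 2, half_pos hc, r', hr', fun y hy hnot =>
    not_le.mp fun h => hnot (hball y hy h)⟩

end Topology

section HermiteInterpolation

lemma eval_divByMonic_X_sub_C_of_isRoot {K : Type*} [Field K] {p : K[X]} {w ζ : K}
    (hw : p.IsRoot w) (hne : w ≠ ζ) : (p /ₘ (X - C ζ)).eval w = p.eval ζ / (ζ - w) := by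
  have h := congrArg (eval w) (X_sub_C_mul_divByMonic_eq_sub_modByMonic p ζ)
  simp only [modByMonic_X_sub_C_eq_C_eval, eval_mul, eval_sub, eval_X, eval_C, hw.eq_zero] at h
  rw [eq_div_iff (sub_ne_zero.mpr hne.symm)]
  linear_combination -h

/-- Hermite's formula `w ↦ (2πi)⁻¹ ∮ g(ζ) / p(ζ) · (p(ζ) - p(w)) / (ζ - w) dζ` for the polynomial
that interpolates `g` at the roots of `p`, all of them being enclosed by the circle `|ζ - c| = R`.
The quotient `(p(ζ) - p(w)) / (ζ - w)`, a polynomial in `w`, is encoded as `p /ₘ (X - C ζ)`. -/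
def hermiteInterpolant (p : ℂ[X]) (g : ℂ → ℂ) (c : ℂ) (R : ℝ) : ℂ[X] :=
  ∑ i ∈ Finset.range (p.natDegree + 1), monomial i
    ((2 * Real.pi * I)⁻¹ * ∮ ζ in C(c, R), g ζ / p.eval ζ * (p /ₘ (X - C ζ)).coeff i)

section Single

variable {p : ℂ[X]} {g : ℂ → ℂ} {c : ℂ} {R : ℝ}

lemma coeff_hermiteInterpolant (i : ℕ) : (hermiteInterpolant p g c R).coeff i =
    (2 * Real.pi * I)⁻¹ * ∮ ζ in C(c, R), g ζ / p.eval ζ * (p /ₘ (X - C ζ)).coeff i := by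
  have hcoeff : ∀ ζ, p.natDegree + 1 ≤ i → (p /ₘ (X - C ζ)).coeff i = 0 := fun ζ hi =>
    coeff_eq_zero_of_natDegree_lt (by rw [natDegree_divByMonic _ (monic_X_sub_C ζ)]; lia)
  simp +contextual [hermiteInterpolant, finsetSum_coeff, coeff_monomial, hcoeff, circleIntegral]

lemma natDegree_hermiteInterpolant_le : (hermiteInterpolant p g c R).natDegree ≤ p.natDegree :=
  natDegree_sum_le_of_forall_le _ _ fun _ hi =>
    (natDegree_monomial_le _).trans (Finset.mem_range_succ_iff.mp hi)

lemma sum_coeff_divByMonic_X_sub_C_eq_cauchyKernel {w ζ : ℂ} (hw : p.IsRoot w)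
    (hζ : p.eval ζ ≠ 0) : ∑ i ∈ Finset.range (p.natDegree + 1),
      w ^ i * (g ζ / p.eval ζ * (p /ₘ (X - C ζ)).coeff i) = (ζ - w)⁻¹ • g ζ := by
  have hdeg : (p /ₘ (X - C ζ)).natDegree < p.natDegree + 1 := by
    rw [natDegree_divByMonic _ (monic_X_sub_C ζ)]; lia
  have hne : w ≠ ζ := by
    rintro rfl
    exact hζ hw
  calc _ = g ζ / p.eval ζ * (p /ₘ (X - C ζ)).eval w := by
        rw [eval_eq_sum_range' hdeg, Finset.mul_sum]
        exact Finset.sum_congr rfl fun i _ => by ring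
    _ = (ζ - w)⁻¹ • g ζ := by
        rw [eval_divByMonic_X_sub_C_of_isRoot hw hne, smul_eq_mul]
        field_simp

lemma eval_ne_zero_of_mem_sphere (hp : p ≠ 0) (hroots : ∀ w ∈ p.roots, w ∈ ball c R) {ζ : ℂ}
    (hζ : ζ ∈ sphere c R) : p.eval ζ ≠ 0 := fun h =>
  sphere_disjoint_ball.notMem_of_mem_left hζ (hroots ζ ((mem_roots hp).mpr h))

lemma eval_hermiteInterpolant (hroots : ∀ w ∈ p.roots, w ∈ ball c R)
    (hg : DifferentiableOn ℂ g (closedBall c R)) {w : ℂ} (hw : w ∈ p.roots) :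
    (hermiteInterpolant p g c R).eval w = g w := by
  have hwR := hroots w hw
  have hR : 0 ≤ R := (pos_of_mem_ball hwR).le
  have hp : ∀ ζ ∈ sphere c R, p.eval ζ ≠ 0 := fun ζ =>
    eval_ne_zero_of_mem_sphere (ne_zero_of_mem_roots hw) hroots
  have hcoeff : ∀ i, Continuous fun ζ => (p /ₘ (X - C ζ)).coeff i := fun i => by
    simp only [coeff_divByMonic_X_sub_C]
    fun_prop
  have hintegrable : ∀ i ∈ Finset.range (p.natDegree + 1), CircleIntegrable
      (fun ζ => w ^ i * (g ζ / p.eval ζ * (p /ₘ (X - C ζ)).coeff i)) c R := fun i _ =>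
    ContinuousOn.circleIntegrable hR <| continuousOn_const.mul <|
      ((hg.continuousOn.mono sphere_subset_closedBall).div p.continuousOn hp).mul
        (hcoeff i).continuousOn
  calc (hermiteInterpolant p g c R).eval w
      = (2 * Real.pi * I)⁻¹ * ∑ i ∈ Finset.range (p.natDegree + 1), ∮ ζ in C(c, R),
          w ^ i * (g ζ / p.eval ζ * (p /ₘ (X - C ζ)).coeff i) := by
        simp only [hermiteInterpolant, eval_finsetSum, eval_monomial, Finset.mul_sum,
          circleIntegral.integral_const_mul]
        exact Finset.sum_congr rfl fun i _ => by ring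
    _ = (2 * Real.pi * I : ℂ)⁻¹ • ∮ ζ in C(c, R), (ζ - w)⁻¹ • g ζ := by
        rw [← circleIntegral.integral_fun_sum hintegrable,
          circleIntegral.integral_congr hR fun ζ hζ =>
            sum_coeff_divByMonic_X_sub_C_eq_cauchyKernel (isRoot_of_mem_roots hw) (hp ζ hζ),
          smul_eq_mul]
    _ = g w := (hg.mono closure_ball_subset_closedBall).diffContOnCl
        |>.two_pi_i_inv_smul_circleIntegral_sub_inv_smul hwR

end Single

section Family

variable {U : Set ℂ} {p : ℂ → ℂ[X]} {F : ℂ → ℂ → ℂ} {m : ℕ} {c : ℂ} {R : ℝ}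

lemma differentiableOn_coeff_hermiteInterpolant (hU : IsOpen U) (hR : 0 ≤ R)
    (hp : ∀ i, DifferentiableOn ℂ (fun z => (p z).coeff i) U)
    (hdeg : ∀ z ∈ U, (p z).degree = m) (hroots : ∀ z ∈ U, ∀ w ∈ (p z).roots, w ∈ ball c R)
    (hF : DifferentiableOn ℂ (Function.uncurry F) (U ×ˢ sphere c R)) (i : ℕ) :
    DifferentiableOn ℂ (fun z => (hermiteInterpolant (p z) (F z) c R).coeff i) U := by
  have hnat : ∀ z ∈ U, (p z).natDegree = m := fun z hz => natDegree_eq_of_degree_eq_some (hdeg z hz)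
  have hcoeff : ∀ i, DifferentiableOn ℂ (fun x : ℂ × ℂ => (p x.1).coeff i) (U ×ˢ sphere c R) :=
    fun i => (hp i).comp differentiableOn_fst fun x hx => hx.1
  have hpne : ∀ x ∈ U ×ˢ sphere c R, (p x.1).eval x.2 ≠ 0 := fun x hx =>
    eval_ne_zero_of_mem_sphere (ne_zero_of_coe_le_degree (hdeg x.1 hx.1).ge) (hroots x.1 hx.1) hx.2
  have hkernel : DifferentiableOn ℂ (fun x : ℂ × ℂ => F x.1 x.2 * ((p x.1).eval x.2)⁻¹ *
      (p x.1 /ₘ (X - C x.2)).coeff i) (U ×ˢ sphere c R) :=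
    (hF.mul ((differentiableOn_eval hcoeff (fun x hx => (hnat x.1 hx.1).le)
      differentiableOn_snd).inv hpne)).mul (differentiableOn_coeff_divByMonic_X_sub_C hcoeff
        (fun x hx => hnat x.1 hx.1) differentiableOn_snd i)
  simp only [coeff_hermiteInterpolant, div_eq_mul_inv]
  exact (differentiableOn_circleIntegral hU hR (G := fun z ζ => F z ζ * ((p z).eval ζ)⁻¹ *
      (p z /ₘ (X - C ζ)).coeff i) hkernel.continuousOn fun ζ hζ =>
    hkernel.comp (f := fun z => (z, ζ)) (by fun_prop) fun z hz => ⟨hz, hζ⟩).const_mul _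

theorem differentiableOn_prod_map_roots (hU : IsOpen U) (hR : 0 ≤ R)
    (hp : ∀ i, DifferentiableOn ℂ (fun z => (p z).coeff i) U)
    (hdeg : ∀ z ∈ U, (p z).degree = m) (hroots : ∀ z ∈ U, ∀ w ∈ (p z).roots, w ∈ ball c R)
    (hF : DifferentiableOn ℂ (Function.uncurry F) (U ×ˢ sphere c R))
    (hFz : ∀ z ∈ U, DifferentiableOn ℂ (F z) (closedBall c R)) :
    DifferentiableOn ℂ (fun z => ((p z).roots.map (F z)).prod) U := by
  refine (differentiableOn_prod_eval_roots hp hdeg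
    (differentiableOn_coeff_hermiteInterpolant hU hR hp hdeg hroots hF)
    fun z hz => natDegree_hermiteInterpolant_le.trans
      (natDegree_eq_of_degree_eq_some (hdeg z hz)).le).congr fun z hz => ?_
  rw [Multiset.map_congr rfl fun w hw => eval_hermiteInterpolant (hroots z hz) (hFz z hz) hw]

end Family

end HermiteInterpolation

section BlaschkeFactor

lemma mem_uDisk {z : ℂ} : z ∈ uDisk ↔ ‖z‖ < 1 := mem_ball_zero_iff

variable {a z : ℂ}

lemma one_sub_conj_mul_ne_zero (ha : ‖a‖ < 1) (hz : ‖z‖ ≤ 1) :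
    1 - (starRingEnd ℂ) a * z ≠ 0 := by
  intro h
  have hnorm : ‖a‖ * ‖z‖ = 1 := by
    simpa using congrArg norm (sub_eq_zero.mp h).symm
  nlinarith [norm_nonneg a, norm_nonneg z]

lemma norm_one_sub_conj_mul_sq_sub_norm_sub_sq (a z : ℂ) :
    ‖1 - (starRingEnd ℂ) a * z‖ ^ 2 - ‖a - z‖ ^ 2 = (1 - ‖a‖ ^ 2) * (1 - ‖z‖ ^ 2) := by
  simp only [← normSq_eq_norm_sq, normSq_apply, sub_re, sub_im, one_re, one_im, mul_re, mul_im,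
    conj_re, conj_im]
  ring

lemma norm_sub_lt_norm_one_sub_conj_mul (ha : ‖a‖ < 1) (hz : ‖z‖ < 1) :
    ‖a - z‖ < ‖1 - (starRingEnd ℂ) a * z‖ := by
  have hpos : 0 < (1 - ‖a‖ ^ 2) * (1 - ‖z‖ ^ 2) := mul_pos
    (sub_pos.mpr (pow_lt_one₀ (norm_nonneg a) ha two_ne_zero))
    (sub_pos.mpr (pow_lt_one₀ (norm_nonneg z) hz two_ne_zero))
  rw [← norm_one_sub_conj_mul_sq_sub_norm_sub_sq, sub_pos] at hpos
  exact lt_of_pow_lt_pow_left₀ 2 (norm_nonneg _) hpos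

lemma norm_one_sub_conj_mul_le_norm_sub (ha : ‖a‖ ≤ 1) (hz : 1 ≤ ‖z‖) :
    ‖1 - (starRingEnd ℂ) a * z‖ ≤ ‖a - z‖ := by
  have hnonpos : (1 - ‖a‖ ^ 2) * (1 - ‖z‖ ^ 2) ≤ 0 := mul_nonpos_of_nonneg_of_nonpos
    (sub_nonneg.mpr (pow_le_one₀ (norm_nonneg a) ha)) (sub_nonpos.mpr (one_le_pow₀ hz))
  rw [← norm_one_sub_conj_mul_sq_sub_norm_sub_sq, sub_nonpos] at hnonpos
  exact le_of_sq_le_sq hnonpos (norm_nonneg _)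

lemma one_sub_conj_mul_eq_neg_mul_conj_sub (a : ℂ) (hz : ‖z‖ = 1) :
    1 - (starRingEnd ℂ) a * z = -(z * (starRingEnd ℂ) (a - z)) := by
  have hzz : z * (starRingEnd ℂ) z = 1 := by simp [mul_conj', hz]
  rw [map_sub]
  linear_combination -hzz

lemma norm_one_sub_conj_mul_eq_norm_sub (a : ℂ) (hz : ‖z‖ = 1) :
    ‖1 - (starRingEnd ℂ) a * z‖ = ‖a - z‖ := by
  rw [one_sub_conj_mul_eq_neg_mul_conj_sub a hz, norm_neg, norm_mul, hz, one_mul, RCLike.norm_conj]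

lemma mul_logDeriv_blaschkeFactor (ha : ‖a‖ < 1) (hz : ‖z‖ = 1) :
    z * logDeriv (fun z => (a - z) / (1 - (starRingEnd ℂ) a * z)) z =
      ((1 - ‖a‖ ^ 2) / ‖a - z‖ ^ 2 : ℝ) := by
  have hden := one_sub_conj_mul_ne_zero ha hz.le
  have hnum : a - z ≠ 0 := by
    rw [sub_ne_zero]
    rintro rfl
    exact ha.ne hz
  have hconj : (starRingEnd ℂ) (a - z) ≠ 0 := (_root_.map_ne_zero _).mpr hnum
  have hz0 : z ≠ 0 := norm_ne_zero_iff.mp (hz ▸ one_ne_zero)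
  have hzz : z * (starRingEnd ℂ) z = 1 := by simp [mul_conj', hz]
  rw [logDeriv_div z hnum hden (by fun_prop) (by fun_prop)]
  rw [logDeriv_apply, logDeriv_apply, show deriv (fun z => a - z) z = -1 by simp,
    show deriv (fun z => 1 - (starRingEnd ℂ) a * z) z = -(starRingEnd ℂ) a by simp,
    one_sub_conj_mul_eq_neg_mul_conj_sub a hz]
  push_cast
  rw [← mul_conj', ← mul_conj']
  field_simp
  rw [map_sub]
  linear_combination hzz

end BlaschkeFactor

section Fiber

variable {n : ℕ} {a : Fin n → ℂ} {c z w : ℂ}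

/-- The numerator of the Blaschke product `blaschke a`, as a polynomial. -/
def blaschkeNum (a : Fin n → ℂ) : ℂ[X] := ∏ j, (C (a j) - X)

/-- The denominator of the Blaschke product `blaschke a`, as a polynomial. -/
def blaschkeDen (a : Fin n → ℂ) : ℂ[X] := ∏ j, (1 - C ((starRingEnd ℂ) (a j)) * X)

/-- The polynomial whose roots are the points where `blaschke a` takes the value `c`. -/
def fiberPoly (a : Fin n → ℂ) (c : ℂ) : ℂ[X] := blaschkeNum a - C c * blaschkeDen a

/-- The polynomial whose roots are the points `φ_1(z), …, φ_{n-1}(z)` of the fiber through `z` other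
than `φ_0(z) = z`, counted with multiplicity. -/
def reducedFiberPoly (a : Fin n → ℂ) (z : ℂ) : ℂ[X] := fiberPoly a (blaschke a z) /ₘ (X - C z)

lemma fiberMS_eq_roots_fiberPoly (a : Fin n → ℂ) (z : ℂ) :
    fiberMS a z = (fiberPoly a (blaschke a z)).roots := rfl

lemma eval_blaschkeNum (a : Fin n → ℂ) (z : ℂ) : (blaschkeNum a).eval z = ∏ j, (a j - z) := by
  simp [blaschkeNum, eval_prod]

lemma eval_blaschkeDen (a : Fin n → ℂ) (z : ℂ) :
    (blaschkeDen a).eval z = ∏ j, (1 - (starRingEnd ℂ) (a j) * z) := by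
  simp [blaschkeDen, eval_prod]

lemma blaschke_eq_eval_div_eval (a : Fin n → ℂ) (z : ℂ) :
    blaschke a z = (blaschkeNum a).eval z / (blaschkeDen a).eval z := by
  rw [eval_blaschkeNum, eval_blaschkeDen, blaschke, Finset.prod_div_distrib]

lemma eval_blaschkeDen_ne_zero (ha : ∀ j, a j ∈ uDisk) (hz : ‖z‖ ≤ 1) :
    (blaschkeDen a).eval z ≠ 0 := by
  rw [eval_blaschkeDen]
  exact Finset.prod_ne_zero_iff.mpr fun j _ => one_sub_conj_mul_ne_zero (mem_uDisk.mp (ha j)) hz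

lemma norm_blaschke_eq_one (ha : ∀ j, a j ∈ uDisk) (hz : ‖z‖ = 1) : ‖blaschke a z‖ = 1 := by
  rw [blaschke, norm_prod]
  refine Finset.prod_eq_one fun j _ => ?_
  have hden := one_sub_conj_mul_ne_zero (mem_uDisk.mp (ha j)) hz.le
  rw [norm_div, ← norm_one_sub_conj_mul_eq_norm_sub _ hz, div_self (norm_ne_zero_iff.mpr hden)]

lemma norm_blaschke_lt_one (hn : n ≠ 0) (ha : ∀ j, a j ∈ uDisk) (hz : ‖z‖ < 1) :
    ‖blaschke a z‖ < 1 := by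
  have : NeZero n := ⟨hn⟩
  have hfactor : ∀ j, ‖(a j - z) / (1 - (starRingEnd ℂ) (a j) * z)‖ < 1 := fun j => by
    have hden := one_sub_conj_mul_ne_zero (mem_uDisk.mp (ha j)) hz.le
    rw [norm_div, div_lt_one (norm_pos_iff.mpr hden)]
    exact norm_sub_lt_norm_one_sub_conj_mul (mem_uDisk.mp (ha j)) hz
  rw [blaschke, norm_prod, ← Finset.mul_prod_erase Finset.univ _ (Finset.mem_univ (0 : Fin n))]
  exact mul_lt_one_of_nonneg_of_lt_one_left (norm_nonneg _) (hfactor _)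
    (Finset.prod_le_one (fun j _ => norm_nonneg _) fun j _ => (hfactor j).le)

lemma differentiableAt_blaschke (ha : ∀ j, a j ∈ uDisk) (hz : ‖z‖ ≤ 1) :
    DifferentiableAt ℂ (blaschke a) z := by
  rw [funext (blaschke_eq_eval_div_eval a)]
  exact (blaschkeNum a).differentiableAt.div (blaschkeDen a).differentiableAt
    (eval_blaschkeDen_ne_zero ha hz)

lemma continuousOn_blaschke (ha : ∀ j, a j ∈ uDisk) :
    ContinuousOn (blaschke a) (closedBall 0 1) := fun _ hz =>
  (differentiableAt_blaschke ha (mem_closedBall_zero_iff.mp hz)).continuousAt.continuousWithinAt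

lemma natDegree_fiberPoly_le (a : Fin n → ℂ) (c : ℂ) : (fiberPoly a c).natDegree ≤ n := by
  have hprod : ∀ f : Fin n → ℂ[X], (∀ j, (f j).natDegree ≤ 1) → (∏ j, f j).natDegree ≤ n :=
    fun f hf => (natDegree_prod_le _ _).trans <|
      (Finset.sum_le_card_nsmul _ _ 1 fun j _ => hf j).trans (by simp)
  have hnum : (blaschkeNum a).natDegree ≤ n := hprod _ fun j => by compute_degree
  have hden : (blaschkeDen a).natDegree ≤ n := hprod _ fun j => by compute_degree
  exact (natDegree_sub_le_of_le hnum ((natDegree_C_mul_le _ _).trans hden)).trans (max_self n).le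

lemma coeff_fiberPoly (a : Fin n → ℂ) (c : ℂ) :
    (fiberPoly a c).coeff n = (-1) ^ n * (1 - c * ∏ j, (starRingEnd ℂ) (a j)) := by
  have hprod : ∀ f : Fin n → ℂ[X], (∀ j, (f j).natDegree ≤ 1) →
      (∏ j, f j).coeff n = ∏ j, (f j).coeff 1 := fun f hf => by
    simpa using coeff_prod_of_natDegree_le Finset.univ f 1 fun j _ => hf j
  have hnum : (blaschkeNum a).coeff n = (-1) ^ n :=
    (hprod _ fun j => by compute_degree).trans (by simp)
  have hden : (blaschkeDen a).coeff n = (-1) ^ n * ∏ j, (starRingEnd ℂ) (a j) :=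
    (hprod _ fun j => by compute_degree).trans (by simp [coeff_one, Finset.prod_neg])
  rw [fiberPoly, coeff_sub, coeff_C_mul, hnum, hden]
  ring

lemma norm_mul_prod_conj_lt_one (ha : ∀ j, a j ∈ uDisk) (hc : ‖c‖ < 1) :
    ‖c * ∏ j, (starRingEnd ℂ) (a j)‖ < 1 := by
  rw [norm_mul, norm_prod]
  refine mul_lt_one_of_nonneg_of_lt_one_left (norm_nonneg c) hc
    (Finset.prod_le_one (fun j _ => norm_nonneg _) fun j _ => ?_)
  rw [RCLike.norm_conj]
  exact (mem_uDisk.mp (ha j)).le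

lemma coeff_fiberPoly_ne_zero (ha : ∀ j, a j ∈ uDisk) (hc : ‖c‖ < 1) :
    (fiberPoly a c).coeff n ≠ 0 := by
  rw [coeff_fiberPoly]
  refine mul_ne_zero (pow_ne_zero n (neg_ne_zero.mpr one_ne_zero)) (sub_ne_zero.mpr fun h => ?_)
  simpa [← h] using norm_mul_prod_conj_lt_one ha hc

lemma norm_coeff_fiberPoly_le (ha : ∀ j, a j ∈ uDisk) (hc : ‖c‖ < 1) :
    ‖(fiberPoly a c).coeff n‖ ≤ 2 := by
  rw [coeff_fiberPoly, norm_mul, norm_pow, norm_neg, norm_one, one_pow, one_mul]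
  have := norm_sub_le 1 (c * ∏ j, (starRingEnd ℂ) (a j))
  rw [norm_one] at this
  linarith [norm_mul_prod_conj_lt_one ha hc]

lemma degree_fiberPoly (ha : ∀ j, a j ∈ uDisk) (hc : ‖c‖ < 1) : (fiberPoly a c).degree = n :=
  degree_eq_of_le_of_coeff_ne_zero (natDegree_le_iff_degree_le.mp (natDegree_fiberPoly_le a c))
    (coeff_fiberPoly_ne_zero ha hc)

lemma norm_lt_one_of_mem_roots_fiberPoly (ha : ∀ j, a j ∈ uDisk) (hc : ‖c‖ < 1)
    (hw : w ∈ (fiberPoly a c).roots) : ‖w‖ < 1 := by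
  have heq : (blaschkeNum a).eval w = c * (blaschkeDen a).eval w := by
    simpa [fiberPoly, sub_eq_zero] using (isRoot_of_mem_roots hw).eq_zero
  by_contra! hge
  have hle : ‖(blaschkeDen a).eval w‖ ≤ ‖(blaschkeNum a).eval w‖ := by
    rw [eval_blaschkeDen, eval_blaschkeNum, norm_prod, norm_prod]
    exact Finset.prod_le_prod (fun j _ => norm_nonneg _)
      fun j _ => norm_one_sub_conj_mul_le_norm_sub (mem_uDisk.mp (ha j)).le hge
  have hpos : 0 < ‖(blaschkeNum a).eval w‖ := by
    rw [norm_pos_iff, eval_blaschkeNum]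
    refine Finset.prod_ne_zero_iff.mpr fun j _ h => ?_
    rw [← sub_eq_zero.mp h] at hge
    exact hge.not_gt (mem_uDisk.mp (ha j))
  rw [heq, norm_mul] at hle hpos
  nlinarith [norm_nonneg c, norm_nonneg ((blaschkeDen a).eval w)]

lemma blaschke_eq_of_mem_roots_fiberPoly (ha : ∀ j, a j ∈ uDisk) (hc : ‖c‖ < 1)
    (hw : w ∈ (fiberPoly a c).roots) : blaschke a w = c := by
  have hden := eval_blaschkeDen_ne_zero ha (norm_lt_one_of_mem_roots_fiberPoly ha hc hw).le
  rw [blaschke_eq_eval_div_eval, div_eq_iff hden]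
  simpa [fiberPoly, sub_eq_zero] using (isRoot_of_mem_roots hw).eq_zero

lemma X_sub_C_mul_reducedFiberPoly (ha : ∀ j, a j ∈ uDisk) (hz : ‖z‖ ≤ 1) :
    (X - C z) * reducedFiberPoly a z = fiberPoly a (blaschke a z) :=
  mul_divByMonic_eq_iff_isRoot.mpr <| by
    simp [fiberPoly, blaschke_eq_eval_div_eval, eval_blaschkeDen_ne_zero ha hz]

lemma degree_reducedFiberPoly (hn : n ≠ 0) (ha : ∀ j, a j ∈ uDisk) (hz : ‖z‖ < 1) :
    (reducedFiberPoly a z).degree = (n - 1 : ℕ) := by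
  have hdeg := degree_fiberPoly ha (norm_blaschke_lt_one hn ha hz)
  have hne : reducedFiberPoly a z ≠ 0 := by
    intro h
    rw [← X_sub_C_mul_reducedFiberPoly ha hz.le, h, mul_zero, degree_zero] at hdeg
    exact WithBot.bot_ne_coe hdeg
  rw [degree_eq_natDegree hne, reducedFiberPoly, natDegree_divByMonic _ (monic_X_sub_C z),
    natDegree_X_sub_C, natDegree_eq_of_degree_eq_some hdeg]

lemma roots_reducedFiberPoly (hn : n ≠ 0) (ha : ∀ j, a j ∈ uDisk) (hz : ‖z‖ < 1) :
    (reducedFiberPoly a z).roots = (fiberMS a z).erase z := by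
  have hfactor := X_sub_C_mul_reducedFiberPoly ha hz.le
  have hne : fiberPoly a (blaschke a z) ≠ 0 := ne_zero_of_coe_le_degree
    (degree_fiberPoly ha (norm_blaschke_lt_one hn ha hz)).ge
  rw [fiberMS_eq_roots_fiberPoly, ← hfactor, roots_mul (hfactor ▸ hne), roots_X_sub_C,
    Multiset.singleton_add, Multiset.erase_cons_head]

lemma mem_uDisk_of_mem_erase_fiberMS (hn : n ≠ 0) (ha : ∀ j, a j ∈ uDisk) (hz : ‖z‖ < 1)
    (hw : w ∈ (fiberMS a z).erase z) : w ∈ uDisk :=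
  mem_uDisk.mpr <| norm_lt_one_of_mem_roots_fiberPoly ha (norm_blaschke_lt_one hn ha hz)
    (Multiset.mem_of_mem_erase hw)

lemma card_erase_fiberMS (hn : n ≠ 0) (ha : ∀ j, a j ∈ uDisk) (hz : ‖z‖ < 1) :
    ((fiberMS a z).erase z).card = n - 1 := by
  rw [← roots_reducedFiberPoly hn ha hz, ← (IsAlgClosed.splits _).natDegree_eq_card_roots,
    natDegree_eq_of_degree_eq_some (degree_reducedFiberPoly hn ha hz)]

lemma differentiableOn_coeff_reducedFiberPoly (hn : n ≠ 0) (ha : ∀ j, a j ∈ uDisk) (i : ℕ) :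
    DifferentiableOn ℂ (fun z => (reducedFiberPoly a z).coeff i) uDisk := by
  refine differentiableOn_coeff_divByMonic_X_sub_C (fun k z hz => ?_) (fun z hz =>
    natDegree_eq_of_degree_eq_some (degree_fiberPoly ha
      (norm_blaschke_lt_one hn ha (mem_uDisk.mp hz)))) differentiableOn_id i
  have hB := differentiableAt_blaschke ha (mem_uDisk.mp hz).le
  simp only [fiberPoly, coeff_sub, coeff_C_mul]
  exact DifferentiableAt.differentiableWithinAt (by fun_prop)

end Fiber

section Blaschke

variable {n : ℕ} {a : Fin n → ℂ} {z : ℂ} {f : ℂ → ℂ}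

lemma exists_isOpen_fiber_subset_ball (hn : n ≠ 0) (ha : ∀ j, a j ∈ uDisk) {z₀ : ℂ}
    (hz₀ : z₀ ∈ uDisk) : ∃ U ⊆ uDisk, IsOpen U ∧ z₀ ∈ U ∧
      ∃ R < 1, U ⊆ ball 0 R ∧ ∀ z ∈ U, ∀ w ∈ fiberMS a z, w ∈ ball 0 R := by
  obtain ⟨c, hcz, hc1⟩ := exists_between (norm_blaschke_lt_one hn ha (mem_uDisk.mp hz₀))
  obtain ⟨R, hR, hball⟩ := exists_lt_forall_mem_ball_of_le (continuousOn_blaschke ha).norm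
    fun y hy => (norm_blaschke_eq_one ha (mem_sphere_zero_iff_norm.mp hy)).symm ▸ hc1
  refine ⟨uDisk ∩ (fun z => ‖blaschke a z‖) ⁻¹' Iio c, inter_subset_left,
    ((continuousOn_blaschke ha).norm.mono ball_subset_closedBall).isOpen_inter_preimage
      isOpen_ball isOpen_Iio, ⟨hz₀, hcz⟩, R, hR, fun z hz =>
      hball z (ball_subset_closedBall hz.1) (mem_Iio.mp hz.2).le, fun z hz w hw => ?_⟩
  have hBz := norm_blaschke_lt_one hn ha (mem_uDisk.mp hz.1)
  refine hball w ?_ ?_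
  · exact mem_closedBall_zero_iff.mpr (norm_lt_one_of_mem_roots_fiberPoly ha hBz hw).le
  · rw [blaschke_eq_of_mem_roots_fiberPoly ha hBz hw]
    exact (mem_Iio.mp hz.2).le

theorem differentiableOn_prod_map_erase_fiberMS (hn : n ≠ 0) (ha : ∀ j, a j ∈ uDisk)
    {F : ℂ → ℂ → ℂ} (hF : DifferentiableOn ℂ (Function.uncurry F) (uDisk ×ˢ uDisk \ diagonal ℂ))
    (hFz : ∀ z ∈ uDisk, DifferentiableOn ℂ (F z) uDisk) :
    DifferentiableOn ℂ (fun z => (((fiberMS a z).erase z).map (F z)).prod) uDisk := by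
  intro z₀ hz₀
  obtain ⟨U, hUD, hU, hz₀U, R, hR, hUR, hfiber⟩ := exists_isOpen_fiber_subset_ball hn ha hz₀
  have hclosed : closedBall 0 R ⊆ uDisk := closedBall_subset_ball hR
  have hprod : DifferentiableOn ℂ (fun z => ((reducedFiberPoly a z).roots.map (F z)).prod) U := by
    refine differentiableOn_prod_map_roots (c := 0) (R := R) hU (pos_of_mem_ball (hUR hz₀U)).le
      (fun i => (differentiableOn_coeff_reducedFiberPoly hn ha i).mono hUD)
      (fun z hz => degree_reducedFiberPoly hn ha (mem_uDisk.mp (hUD hz))) (fun z hz w hw => ?_)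
      (hF.mono fun x hx => ?_) fun z hz => (hFz z (hUD hz)).mono hclosed
    · rw [roots_reducedFiberPoly hn ha (mem_uDisk.mp (hUD hz))] at hw
      exact hfiber z hz w (Multiset.mem_of_mem_erase hw)
    · refine ⟨⟨hUD hx.1, hclosed (sphere_subset_closedBall hx.2)⟩, fun hdiag => ?_⟩
      exact sphere_disjoint_ball.notMem_of_mem_left hx.2 (mem_diagonal_iff.mp hdiag ▸ hUR hx.1)
  refine ((hprod.congr fun z hz => ?_).differentiableAt (hU.mem_nhds hz₀U)).differentiableWithinAt
  rw [roots_reducedFiberPoly hn ha (mem_uDisk.mp (hUD hz))]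

/-- The quotient `Γ(f) = 𝒟(f) / 𝒟` with its singularities removed: the product over
`φ_1(z), …, φ_{n-1}(z)` of the divided differences of `f`, where `dslope f z z = f' z` fills in the
factors with `φ_j(z) = z`. -/
def gammaFn (a : Fin n → ℂ) (f : ℂ → ℂ) (z : ℂ) : ℂ :=
  (((fiberMS a z).erase z).map (dslope f z)).prod

lemma gammaFn_mul_calD_id (a : Fin n → ℂ) (f : ℂ → ℂ) (z : ℂ) :
    gammaFn a f z * calD a id z = calD a f z := by
  rw [gammaFn, calD, calD, ← Multiset.prod_map_mul]
  congr 1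
  refine Multiset.map_congr rfl fun w _ => ?_
  rw [id, id, ← neg_sub w z, ← neg_sub (f w), ← sub_smul_dslope f z w, smul_eq_mul]
  ring

lemma differentiableOn_comp_fst_sub_comp_snd {s : Set ℂ} (hf : DifferentiableOn ℂ f s) :
    DifferentiableOn ℂ (fun x : ℂ × ℂ => f x.1 - f x.2) (s ×ˢ s) :=
  (hf.comp differentiableOn_fst fun _ hx => hx.1).sub
    (hf.comp differentiableOn_snd fun _ hx => hx.2)

lemma differentiableOn_calD (hn : n ≠ 0) (ha : ∀ j, a j ∈ uDisk) (hf : DifferentiableOn ℂ f uDisk) :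
    DifferentiableOn ℂ (calD a f) uDisk :=
  differentiableOn_prod_map_erase_fiberMS hn ha
    ((differentiableOn_comp_fst_sub_comp_snd hf).mono sdiff_subset) fun _ _ => hf.const_sub _

lemma differentiableOn_gammaFn (hn : n ≠ 0) (ha : ∀ j, a j ∈ uDisk)
    (hf : DifferentiableOn ℂ f uDisk) : DifferentiableOn ℂ (gammaFn a f) uDisk := by
  refine differentiableOn_prod_map_erase_fiberMS hn ha ?_ fun z hz =>
    (differentiableOn_dslope (isOpen_ball.mem_nhds hz)).mpr hf
  have hquot : DifferentiableOn ℂ (fun x : ℂ × ℂ => (f x.1 - f x.2) * (x.1 - x.2)⁻¹)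
      (uDisk ×ˢ uDisk \ diagonal ℂ) :=
    ((differentiableOn_comp_fst_sub_comp_snd hf).mono sdiff_subset).mul <|
      (differentiableOn_fst.sub differentiableOn_snd).inv fun x hx => sub_ne_zero.mpr hx.2
  refine hquot.congr fun x hx => ?_
  rw [Function.uncurry, dslope_of_ne _ (Ne.symm hx.2), slope_comm, slope_def_field, div_eq_mul_inv]

lemma norm_calD_le (hn : n ≠ 0) (ha : ∀ j, a j ∈ uDisk) {M : ℝ} (hM : ∀ z ∈ uDisk, ‖f z‖ ≤ M)
    (hz : z ∈ uDisk) : ‖calD a f z‖ ≤ (2 * M) ^ (n - 1) := by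
  have hfactor : ∀ w ∈ (fiberMS a z).erase z, ‖f z - f w‖ ≤ 2 * M := fun w hw => by
    have := hM w (mem_uDisk_of_mem_erase_fiberMS hn ha (mem_uDisk.mp hz) hw)
    linarith [norm_sub_le (f z) (f w), hM z hz]
  calc ‖calD a f z‖ = (((fiberMS a z).erase z).map fun w => ‖f z - f w‖).prod := by
        rw [calD, ← normHom_apply, map_multiset_prod, Multiset.map_map]
        rfl
    _ ≤ (((fiberMS a z).erase z).map fun _ => 2 * M).prod :=
        Multiset.prod_map_le_prod_map₀ _ _ (fun w _ => norm_nonneg _) hfactor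
    _ = (2 * M) ^ (n - 1) := by
        rw [Multiset.map_const', Multiset.prod_replicate,
          card_erase_fiberMS hn ha (mem_uDisk.mp hz)]

lemma eval_reducedFiberPoly_self (a : Fin n → ℂ) (z : ℂ) :
    (reducedFiberPoly a z).eval z = (derivative (fiberPoly a (blaschke a z))).eval z := by
  rw [reducedFiberPoly,
    ← divByMonic_add_X_sub_C_mul_derivative_divByMonic_eq_derivative (fiberPoly a _) z]
  simp

lemma coeff_fiberPoly_mul_calD_id (hn : n ≠ 0) (ha : ∀ j, a j ∈ uDisk) (hz : ‖z‖ < 1) :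
    (fiberPoly a (blaschke a z)).coeff n * calD a id z =
      (derivative (fiberPoly a (blaschke a z))).eval z := by
  have hlead : (reducedFiberPoly a z).leadingCoeff = (fiberPoly a (blaschke a z)).coeff n := by
    have hdeg := degree_fiberPoly ha (norm_blaschke_lt_one hn ha hz)
    calc (reducedFiberPoly a z).leadingCoeff = (fiberPoly a (blaschke a z)).leadingCoeff := by
          rw [← X_sub_C_mul_reducedFiberPoly ha hz.le, leadingCoeff_mul, leadingCoeff_X_sub_C,
            one_mul]
      _ = (fiberPoly a (blaschke a z)).coeff n :=
          congrArg (coeff _) (natDegree_eq_of_degree_eq_some hdeg)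
  rw [← eval_reducedFiberPoly_self, (IsAlgClosed.splits (reducedFiberPoly a z)).eq_prod_roots,
    hlead, roots_reducedFiberPoly hn ha hz]
  simp [calD, eval_multiset_prod, Multiset.map_map]

lemma eval_derivative_fiberPoly (ha : ∀ j, a j ∈ uDisk) (hz : ‖z‖ ≤ 1) :
    (derivative (fiberPoly a (blaschke a z))).eval z =
      deriv (blaschke a) z * (blaschkeDen a).eval z := by
  have hden := eval_blaschkeDen_ne_zero ha hz
  rw [funext (blaschke_eq_eval_div_eval a), deriv_fun_div (blaschkeNum a).differentiableAt
    (blaschkeDen a).differentiableAt hden, Polynomial.deriv, Polynomial.deriv]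
  simp only [fiberPoly, derivative_sub, derivative_C_mul, eval_sub, eval_C_mul]
  field_simp

lemma mul_logDeriv_blaschke (ha : ∀ j, a j ∈ uDisk) (hz : ‖z‖ = 1) :
    z * logDeriv (blaschke a) z = (∑ j, (1 - ‖a j‖ ^ 2) / ‖a j - z‖ ^ 2 : ℝ) := by
  have hden : ∀ j, 1 - (starRingEnd ℂ) (a j) * z ≠ 0 := fun j =>
    one_sub_conj_mul_ne_zero (mem_uDisk.mp (ha j)) hz.le
  have hnum : ∀ j, a j - z ≠ 0 := fun j => by
    rw [← norm_ne_zero_iff, ← norm_one_sub_conj_mul_eq_norm_sub _ hz]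
    exact norm_ne_zero_iff.mpr (hden j)
  have hlog : logDeriv (blaschke a) z =
      ∑ j, logDeriv (fun z => (a j - z) / (1 - (starRingEnd ℂ) (a j) * z)) z :=
    logDeriv_prod (fun j _ => div_ne_zero (hnum j) (hden j))
      fun j _ => DifferentiableAt.fun_div (by fun_prop) (by fun_prop) (hden j)
  rw [hlog, Finset.mul_sum, ofReal_sum]
  exact Finset.sum_congr rfl fun j _ => mul_logDeriv_blaschkeFactor (mem_uDisk.mp (ha j)) hz

lemma deriv_blaschke_ne_zero (hn : n ≠ 0) (ha : ∀ j, a j ∈ uDisk) (hz : ‖z‖ = 1) :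
    deriv (blaschke a) z ≠ 0 := by
  have : NeZero n := ⟨hn⟩
  have hsum : 0 < ∑ j, (1 - ‖a j‖ ^ 2) / ‖a j - z‖ ^ 2 := by
    refine Finset.sum_pos (fun j _ => div_pos ?_ ?_) ⟨0, Finset.mem_univ _⟩
    · exact sub_pos.mpr (pow_lt_one₀ (norm_nonneg _) (mem_uDisk.mp (ha j)) two_ne_zero)
    · refine pow_pos (norm_pos_iff.mpr (sub_ne_zero.mpr fun h => ?_)) 2
      exact (mem_uDisk.mp (ha j)).ne (h ▸ hz)
  intro h
  have hlog := mul_logDeriv_blaschke ha hz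
  rw [logDeriv_apply, h, zero_div, mul_zero] at hlog
  exact hsum.ne (ofReal_eq_zero.mp hlog.symm).symm

lemma exists_pos_forall_notMem_ball_lt_norm_calD_id (hn : n ≠ 0) (ha : ∀ j, a j ∈ uDisk) :
    ∃ c > 0, ∃ R < 1, ∀ z ∈ uDisk, z ∉ ball 0 R → c < ‖calD a id z‖ := by
  have hcont : ContinuousOn (fun z => ‖(derivative (fiberPoly a (blaschke a z))).eval z‖)
      (closedBall 0 1) := by
    simp only [fiberPoly, derivative_sub, derivative_C_mul, eval_sub, eval_C_mul]
    exact ((Polynomial.continuousOn _).sub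
      ((continuousOn_blaschke ha).mul (Polynomial.continuousOn _))).norm
  obtain ⟨c, hc, R, hR, hlow⟩ := exists_pos_forall_notMem_ball_lt hcont fun z hz => by
    have hz1 := mem_sphere_zero_iff_norm.mp hz
    rw [eval_derivative_fiberPoly ha hz1.le]
    exact norm_pos_iff.mpr
      (mul_ne_zero (deriv_blaschke_ne_zero hn ha hz1) (eval_blaschkeDen_ne_zero ha hz1.le))
  refine ⟨c / 2, half_pos hc, R, hR, fun z hz hzR => ?_⟩
  have hz1 := mem_uDisk.mp hz
  have hlt := hlow z (ball_subset_closedBall hz) hzR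
  rw [← coeff_fiberPoly_mul_calD_id hn ha hz1, norm_mul] at hlt
  have hcoeff := norm_coeff_fiberPoly_le ha (norm_blaschke_lt_one hn ha hz1)
  linarith [mul_le_mul_of_nonneg_right hcoeff (norm_nonneg (calD a id z))]

lemma exists_bound_of_isGamma (hn : n ≠ 0) (ha : ∀ j, a j ∈ uDisk) {M : ℝ}
    (hM : ∀ z ∈ uDisk, ‖f z‖ ≤ M) {G : ℂ → ℂ} (hG : IsGamma a f G) :
    ∃ M' : ℝ, ∀ z ∈ uDisk, ‖G z‖ ≤ M' := by
  obtain ⟨c, hc, R, hR, hlow⟩ := exists_pos_forall_notMem_ball_lt_norm_calD_id hn ha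
  obtain ⟨K, hK⟩ := (isCompact_closedBall (0 : ℂ) R).exists_bound_of_continuousOn
    (hG.1.continuousOn.mono (closedBall_subset_ball hR))
  refine ⟨max K ((2 * M) ^ (n - 1) / c), fun z hz => ?_⟩
  by_cases hzR : z ∈ ball 0 R
  · exact le_max_of_le_left (hK z (ball_subset_closedBall hzR))
  · refine le_max_of_le_right ((le_div_iff₀ hc).mpr ?_)
    calc ‖G z‖ * c ≤ ‖G z‖ * ‖calD a id z‖ := by
          gcongr
          exact (hlow z hz hzR).le
      _ = ‖calD a f z‖ := by rw [← norm_mul, hG.2 z hz]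
      _ ≤ (2 * M) ^ (n - 1) := norm_calD_le hn ha hM hz

end Blaschke

theorem stmt2_general {n : ℕ} (hn : n ≠ 0) {a : Fin n → ℂ} (ha : ∀ j, a j ∈ uDisk)
    {f : ℂ → ℂ} (hf : DifferentiableOn ℂ f uDisk) :
    DifferentiableOn ℂ (calD a f) uDisk ∧
    (∃ G : ℂ → ℂ, DifferentiableOn ℂ G uDisk ∧
      ∀ z ∈ uDisk, G z * calD a id z = calD a f z) ∧
    ((∃ C : ℝ, ∀ z ∈ uDisk, ‖f z‖ ≤ C) →
      ∀ G : ℂ → ℂ, IsGamma a f G → ∃ C : ℝ, ∀ z ∈ uDisk, ‖G z‖ ≤ C) :=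
  ⟨differentiableOn_calD hn ha hf,
    ⟨gammaFn a f, differentiableOn_gammaFn hn ha hf, fun z _ => gammaFn_mul_calD_id a f z⟩,
    fun ⟨_, hC⟩ _ hG => exists_bound_of_isGamma hn ha hC hG⟩

/-- For `f` holomorphic on the disk: (i) `𝒟(f)` is holomorphic on the
disk; (ii) the quotient `Γ(f) = 𝒟(f)/𝒟` has only removable singularities, i.e. there is
a holomorphic `G` on the disk with `G·𝒟 = 𝒟(f)`; (iii) if `f` is bounded then any such
`G` is bounded. -/
theorem stmt2 {n : ℕ} (hn : 2 ≤ n) (a : Fin n → ℂ) (ha : ∀ j, a j ∈ uDisk)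
    (ha0 : a ⟨0, by omega⟩ = 0)
    (f : ℂ → ℂ) (hf : DifferentiableOn ℂ f uDisk) :
    DifferentiableOn ℂ (calD a f) uDisk ∧
    (∃ G : ℂ → ℂ, DifferentiableOn ℂ G uDisk ∧
      ∀ z ∈ uDisk, G z * calD a id z = calD a f z) ∧
    ((∃ C : ℝ, ∀ z ∈ uDisk, ‖f z‖ ≤ C) →
      ∀ G : ℂ → ℂ, IsGamma a f G → ∃ C : ℝ, ∀ z ∈ uDisk, ‖G z‖ ≤ C) :=
  stmt2_general (by omega) ha hf
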